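/- Let Y ⊆ ℝ^k be a closed perfect set. For any x ∈ LP(ℤ,Y) (a limit-periodic Y-valued sequence), the spectrum of the discrete Schrödinger operator H_x has no isolated points. -/

import Mathlib

/-!
The potential `W` of `H_x` is bounded and limit-periodic, and for such `W` an isolated point `E` of the
spectrum is impossible.

Write `A = H_x - E`. If `E` is isolated in the spectrum, then `A - t` is invertible for small `t ≠ 0`,
and `gap_on_range` derives from this that `A` is bounded below on its range, by an argument with
quadratic forms that needs neither the spectral theorem nor complex scalars. Hence `‖A f‖` controls
the distance from `f` to `ker A` (`exists_ker_close`). In particular `ker A ≠ 0`, as otherwise `A`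
would be bijective and `E` not in the spectrum.

Take `f ≠ 0` in `ker A`. For a suitable almost period `p`, every translate `g = f(· + j p)` satisfies
`‖A g‖ ≤ ε ‖f‖`, so `g` is close to some `u ∈ ker A`. The values at `0` and `1` determine the elements
of `ker A`, so `ker A` is finite-dimensional and `‖u‖` is controlled by `|u 0|` and `|u 1|`
(`exists_norm_le_of_eigen`). For `j` large, `g 0` and `g 1` are tiny because `f ∈ ℓ²`, so `u`, and with
it `g`, is small in norm; but `‖g‖ = ‖f‖`.
-/

open Set MeasureTheory BoundedContinuousFunction

noncomputable section

/-- ℓ²(ℤ; ℝ). -/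
abbrev Ell2 : Type := lp (fun _ : ℤ => ℝ) 2

/-- Spectrum of the discrete Schrödinger operator `H_W = Δ + W` on `ℓ²(ℤ)`:
`E` lies in the spectrum iff `H_W - E` is not a linear bijection of `ℓ²(ℤ)`
(for bounded `W`, by the open mapping theorem this is equivalent to `H_W - E`
not being boundedly invertible). -/
def SchrodingerSpectrum (W : ℤ → ℝ) : Set ℝ :=
  {E : ℝ | ¬ ∃ T : Ell2 ≃ₗ[ℝ] Ell2,
      ∀ f : Ell2, ∀ n : ℤ,
        (T f) n = f (n - 1) + f (n + 1) + (W n - E) * f n}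

/-- A Cantor set of zero Hausdorff dimension: nonempty, compact, without isolated
points, with empty interior, and of Hausdorff dimension zero. -/
def IsZeroDimCantor (s : Set ℝ) : Prop :=
  s.Nonempty ∧ IsCompact s ∧ Preperfect s ∧ interior s = ∅ ∧ dimH s = 0

/-- Periodic bounded sequences. -/
def IsPeriodicSeq {α : Type*} [PseudoMetricSpace α] (W : ℤ →ᵇ α) : Prop :=
  ∃ q : ℕ, 0 < q ∧ ∀ n : ℤ, W (n + q) = W n

/-- The limit-periodic functions `ℤ → ℝ`: uniform limits of periodic functions. -/
def LPZ : Set (ℤ →ᵇ ℝ) := closure {W : ℤ →ᵇ ℝ | IsPeriodicSeq W}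

/-- A subset of ℝ is discrete if it has no accumulation points. -/
def IsDiscreteSet (S : Set ℝ) : Prop := ∀ x : ℝ, ¬ AccPt x (Filter.principal S)

/-- Periodic extension `w^{♯ℤ}` of a finite word `w`. -/
def perExt {α : Type*} [Zero α] {m : ℕ} (w : Fin m → α) : ℤ → α :=
  fun n =>
    if h : 0 < m then
      w ⟨(n % (m : ℤ)).toNat, by
        have h1 : 0 ≤ n % (m : ℤ) := Int.emod_nonneg n (by exact_mod_cast h.ne')
        have h2 : n % (m : ℤ) < (m : ℤ) := Int.emod_lt_of_pos n (by exact_mod_cast h)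
        omega⟩
    else 0

/-- Aggregation `y^♮` of a sequence of blocks in `ℝ^k` into a potential `ℤ → ℝ`. -/
def agg (k : ℕ) (x : ℤ → (Fin k → ℝ)) : ℤ → ℝ :=
  fun n =>
    if h : 0 < k then
      x (Int.fdiv n k) ⟨(n % (k : ℤ)).toNat, by
        have h1 : 0 ≤ n % (k : ℤ) := Int.emod_nonneg n (by exact_mod_cast h.ne')
        have h2 : n % (k : ℤ) < (k : ℤ) := Int.emod_lt_of_pos n (by exact_mod_cast h)
        omega⟩
    else 0

/-- `Y ⊆ ℝ^k` is gap-rich with exceptional set `S`: `S` is discrete and near any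
word over `Y` there is a word over `Y` whose periodic Schrödinger operator has a
gap at any prescribed energy `E ∉ S`. -/
def GapRich (k : ℕ) (Y : Set (Fin k → ℝ)) (S : Set ℝ) : Prop :=
  IsDiscreteSet S ∧
  ∀ E : ℝ, E ∉ S → ∀ m : ℕ, 0 < m → ∀ x : Fin m → (Fin k → ℝ), (∀ i, x i ∈ Y) →
    ∀ ε : ℝ, 0 < ε →
      ∃ l : ℕ, 0 < l ∧ ∃ y : Fin l → (Fin k → ℝ),
        (∀ i, y i ∈ Y) ∧
        (∀ j : ℤ, dist (perExt x j) (perExt y j) < ε) ∧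
        E ∉ SchrodingerSpectrum (agg k (perExt y))

/-- The periodic elements of `Y^ℤ`. -/
def PerY (k : ℕ) (Y : Set (Fin k → ℝ)) : Set (ℤ →ᵇ (Fin k → ℝ)) :=
  {x | IsPeriodicSeq x ∧ ∀ n : ℤ, x n ∈ Y}

/-- The limit-periodic elements of `Y^ℤ`: uniform limits of periodic elements. -/
def LPY (k : ℕ) (Y : Set (Fin k → ℝ)) : Set (ℤ →ᵇ (Fin k → ℝ)) := closure (PerY k Y)

/-! ### Isolated spectrum of symmetric operators -/

section Hilbert
variable {V : Type*} [NormedAddCommGroup V] [InnerProductSpace ℝ V]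

/-- A nonnegative symmetric operator that is bounded below is coercive. Nonnegativity at
`f - ‖T‖⁻¹ T f` gives `‖T f‖² ≤ ‖T‖ ⟪T f, f⟫`; the proof uses `‖T‖ + 1` to avoid dividing by zero. -/
lemma coercive_of_nonneg_of_bddBelow (T : V →L[ℝ] V)
    (hT : ∀ f g, inner ℝ (T f) g = inner ℝ f (T g)) (hpos : ∀ f, 0 ≤ inner ℝ (T f) f)
    {c : ℝ} (hc : 0 < c) (hbelow : ∀ f, c * ‖f‖ ≤ ‖T f‖) :
    ∃ κ > 0, ∀ f, κ * ‖f‖ ^ 2 ≤ inner ℝ (T f) f := by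
  set M := ‖T‖ + 1 with hM
  have hM0 : 0 < M := by positivity
  refine ⟨c ^ 2 / M, by positivity, fun f => ?_⟩
  have h1 := hpos (f - M⁻¹ • T f)
  have h2 : inner ℝ (T (T f)) (T f) ≤ M * ‖T f‖ ^ 2 := by
    calc inner ℝ (T (T f)) (T f) ≤ ‖T (T f)‖ * ‖T f‖ := real_inner_le_norm _ _
      _ ≤ (M * ‖T f‖) * ‖T f‖ := by
        gcongr
        exact (T.le_opNorm _).trans (by gcongr; linarith)
      _ = _ := by ring
  have h3 : inner ℝ (T (T f)) f = ‖T f‖ ^ 2 := by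
    rw [hT, real_inner_self_eq_norm_sq]
  rw [map_sub, map_smul, inner_sub_left, inner_sub_right, inner_sub_right, inner_smul_left,
    inner_smul_right, inner_smul_left, inner_smul_right, h3, real_inner_self_eq_norm_sq] at h1
  simp only [conj_trivial] at h1
  have h4 : M⁻¹ * (M⁻¹ * inner ℝ (T (T f)) (T f)) ≤ M⁻¹ * ‖T f‖ ^ 2 := by
    calc _ ≤ M⁻¹ * (M⁻¹ * (M * ‖T f‖ ^ 2)) := by gcongr
      _ = _ := by field_simp
  have h5 : (c * ‖f‖) ^ 2 ≤ ‖T f‖ ^ 2 := by gcongr; exact hbelow f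
  have h6 : c ^ 2 / M * ‖f‖ ^ 2 = M⁻¹ * (c * ‖f‖) ^ 2 := by field_simp
  rw [h6]
  have h7 : M⁻¹ * (c * ‖f‖) ^ 2 ≤ M⁻¹ * ‖T f‖ ^ 2 := by gcongr
  linarith

/-- If `A - t` is bounded below for all `0 < |t| < δ`, then `A` is bounded below by `δ / 2` on its
range. With `s = (δ / 2)²` this says that `q f = ⟪(A⁴ - s A²) f, f⟫` is nonnegative. Otherwise its
infimum `m` over unit vectors is negative, and `m ≥ - s² / 4` by completing the square, so that
`A⁴ - s A² - m = (A² - s₁) (A² - s₂)` with `s₁, s₂ ∈ (0, s)`. Each factor splits as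
`(A - √sᵢ) (A + √sᵢ)`, hence the product is bounded below and therefore coercive, which contradicts
the choice of `m`. -/
lemma gap_on_range (A : V →L[ℝ] V)
    (hA : ∀ f g, inner ℝ (A f) g = inner ℝ f (A g)) {δ : ℝ} (hδ : 0 < δ)
    (hinv : ∀ t : ℝ, t ≠ 0 → |t| < δ → ∃ c > 0, ∀ f, c * ‖f‖ ≤ ‖A f - t • f‖) :
    ∀ f, (δ / 2) * ‖A f‖ ≤ ‖A (A f)‖ := by
  by_contra! hcon
  obtain ⟨f₀, hf₀⟩ := hcon
  set s := (δ / 2) ^ 2 with hs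
  have hs0 : 0 < s := by positivity
  set q : V → ℝ := fun f => ‖A (A f)‖ ^ 2 - s * ‖A f‖ ^ 2 with hq
  have hq0 : q f₀ < 0 := by
    have : ‖A (A f₀)‖ ^ 2 < (δ / 2 * ‖A f₀‖) ^ 2 := by gcongr
    simp only [hq, hs]; nlinarith
  have hqsmul : ∀ (a : ℝ) f, q (a • f) = a ^ 2 * q f := by
    intro a f
    simp only [hq, map_smul, norm_smul, mul_pow, Real.norm_eq_abs, sq_abs]; ring
  have hqlow : ∀ f, -(s ^ 2 / 4) * ‖f‖ ^ 2 ≤ q f := by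
    intro f
    have h := norm_sub_sq_real (A (A f)) ((s / 2) • f)
    rw [inner_smul_right, hA, real_inner_self_eq_norm_sq, norm_smul, mul_pow, Real.norm_eq_abs,
      sq_abs] at h
    have := sq_nonneg ‖A (A f) - (s / 2) • f‖
    simp only [hq]; nlinarith
  set R : Set ℝ := q '' {f | ‖f‖ = 1} with hR
  have hbdd : BddBelow R := ⟨-(s ^ 2 / 4), by
    rintro _ ⟨f, hf, rfl⟩
    have := hqlow f
    rw [show ‖f‖ = 1 from hf] at this; linarith⟩
  have hf₀n : ‖f₀‖ ≠ 0 := by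
    intro h
    rw [norm_eq_zero] at h
    simp [hq, h] at hq0
  have hmem : q (‖f₀‖⁻¹ • f₀) ∈ R := ⟨_, by simp [norm_smul, hf₀n], rfl⟩
  set m := sInf R with hm
  have hmneg : m < 0 := by
    refine (csInf_le hbdd hmem).trans_lt ?_
    rw [hqsmul]
    have : 0 < (‖f₀‖⁻¹) ^ 2 := by positivity
    nlinarith
  have hmlow : -(s ^ 2 / 4) ≤ m := by
    refine le_csInf ⟨_, hmem⟩ ?_
    rintro _ ⟨f, hf, rfl⟩
    have := hqlow f
    rw [show ‖f‖ = 1 from hf] at this; linarith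
  have hqm : ∀ f, m * ‖f‖ ^ 2 ≤ q f := by
    intro f
    by_cases hf : ‖f‖ = 0
    · have h0 := norm_eq_zero.1 hf
      simp [hq, h0]
    · have h1 : m ≤ q (‖f‖⁻¹ • f) := csInf_le hbdd ⟨_, by simp [norm_smul, hf], rfl⟩
      rw [hqsmul] at h1
      have : 0 < ‖f‖ ^ 2 := by positivity
      calc m * ‖f‖ ^ 2 ≤ ((‖f‖⁻¹) ^ 2 * q f) * ‖f‖ ^ 2 := by gcongr
        _ = q f := by field_simp
  -- The roots `(s ± d) / 2` of `X² - s X - m` are real and lie in `(0, s)`.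
  set d := Real.sqrt (s ^ 2 + 4 * m) with hd
  have hd2 : d ^ 2 = s ^ 2 + 4 * m := Real.sq_sqrt (by linarith)
  have hd0 : 0 ≤ d := Real.sqrt_nonneg _
  have hds : d < s := by nlinarith
  have hfac : ∀ r : ℝ, 0 < r → r < s → ∃ c > 0, ∀ f, c * ‖f‖ ≤ ‖A (A f) - r • f‖ := by
    intro r hr hrs
    have hr0 : 0 < Real.sqrt r := Real.sqrt_pos.2 hr
    have hrδ : Real.sqrt r < δ := by
      have : Real.sqrt r < δ / 2 := by
        rw [Real.sqrt_lt' (by positivity)]; exact hrs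
      linarith
    obtain ⟨c₁, hc₁, h₁⟩ := hinv (Real.sqrt r) hr0.ne' (by rwa [abs_of_pos hr0])
    obtain ⟨c₂, hc₂, h₂⟩ := hinv (-Real.sqrt r) (by linarith) (by rwa [abs_neg, abs_of_pos hr0])
    refine ⟨c₁ * c₂, by positivity, fun f => ?_⟩
    have e : A (A f - (-Real.sqrt r) • f) - Real.sqrt r • (A f - (-Real.sqrt r) • f)
        = A (A f) - r • f := by
      nth_rewrite 4 [← Real.mul_self_sqrt hr.le]
      simp only [map_sub, map_smul]
      module
    rw [← e]
    calc c₁ * c₂ * ‖f‖ = c₁ * (c₂ * ‖f‖) := by ring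
      _ ≤ c₁ * ‖A f - (-Real.sqrt r) • f‖ := by gcongr; exact h₂ f
      _ ≤ _ := h₁ _
  obtain ⟨c₁, hc₁, h₁⟩ := hfac ((s + d) / 2) (by linarith) (by linarith)
  obtain ⟨c₂, hc₂, h₂⟩ := hfac ((s - d) / 2) (by linarith) (by linarith)
  let T : V →L[ℝ] V := (A ∘L A) ∘L (A ∘L A) - s • (A ∘L A) - m • ContinuousLinearMap.id ℝ V
  have hTapp : ∀ f, T f = A (A (A (A f))) - s • A (A f) - m • f := fun f => rfl
  have hTin : ∀ f, inner ℝ (T f) f = q f - m * ‖f‖ ^ 2 := by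
    intro f
    rw [hTapp, inner_sub_left, inner_sub_left, inner_smul_left, inner_smul_left,
      hA (A (A (A f))), hA (A (A f)), hA (A f) f]
    simp only [real_inner_self_eq_norm_sq, conj_trivial, hq]
  have hTsymm : ∀ f g, inner ℝ (T f) g = inner ℝ f (T g) := by
    intro f g
    simp only [hTapp, inner_sub_left, inner_sub_right, inner_smul_left, inner_smul_right, hA,
      conj_trivial]
  obtain ⟨κ, hκ, hcoer⟩ := coercive_of_nonneg_of_bddBelow T hTsymm
    (fun f => by rw [hTin]; linarith [hqm f]) (c := c₁ * c₂) (by positivity) (fun f => by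
      have e : A (A (A (A f) - ((s - d) / 2) • f)) - ((s + d) / 2) • (A (A f) - ((s - d) / 2) • f)
          = T f := by
        have hm' : m = -(((s + d) / 2) * ((s - d) / 2)) := by linarith [hd2]
        rw [hTapp, hm']
        simp only [map_sub, map_smul]
        module
      rw [← e]
      calc c₁ * c₂ * ‖f‖ = c₁ * (c₂ * ‖f‖) := by ring
        _ ≤ c₁ * ‖A (A f) - ((s - d) / 2) • f‖ := by gcongr; exact h₂ f
        _ ≤ _ := h₁ _)
  have : m + κ ≤ m := by
    refine le_csInf ⟨_, hmem⟩ ?_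
    rintro _ ⟨f, hf, rfl⟩
    have := hcoer f
    rw [hTin, show ‖f‖ = 1 from hf] at this; linarith
  linarith

/-- If `A` is bounded below by `c` on its range, it is so on the closure of the range, which is the
orthogonal complement of the kernel; thus the distance from `f` to the kernel is at most
`‖A f‖ / c`. -/
lemma exists_ker_close [CompleteSpace V] (A : V →L[ℝ] V)
    (hA : ∀ f g, inner ℝ (A f) g = inner ℝ f (A g)) {c : ℝ}
    (hgap : ∀ f, c * ‖A f‖ ≤ ‖A (A f)‖) (f : V) :
    ∃ u, A u = 0 ∧ c * ‖f - u‖ ≤ ‖A f‖ := by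
  have hcl : IsClosed ((LinearMap.ker A.toLinearMap : Submodule ℝ V) : Set V) := A.isClosed_ker
  have : CompleteSpace (LinearMap.ker A.toLinearMap) := hcl.completeSpace_coe
  obtain ⟨u, hu, g, hg, hfg⟩ :=
    (LinearMap.ker A.toLinearMap).exists_add_mem_mem_orthogonal f
  have hu' : A u = 0 := hu
  refine ⟨u, hu', ?_⟩
  have hadj : ContinuousLinearMap.adjoint A = A :=
    ((ContinuousLinearMap.eq_adjoint_iff A A).2 hA).symm
  have hg' : g ∈ closure (Set.range A) := by
    have h := A.orthogonal_ker
    rw [hadj] at h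
    have h2 : g ∈ (LinearMap.range A.toLinearMap).topologicalClosure := h ▸ hg
    exact h2
  have hgg : c * ‖g‖ ≤ ‖A g‖ := by
    have hclosed : IsClosed {v : V | c * ‖v‖ ≤ ‖A v‖} :=
      isClosed_le (by fun_prop) (by fun_prop)
    refine closure_minimal ?_ hclosed hg'
    rintro _ ⟨v, rfl⟩
    exact hgap v
  have e1 : f - u = g := by rw [hfg]; abel
  have e2 : A f = A g := by rw [hfg, map_add, hu', zero_add]
  rw [e1, e2]; exact hgg

/-- The range is closed by the lower bound, and dense because its complement is the kernel. -/
lemma bijective_of_bddBelow [CompleteSpace V] (A : V →L[ℝ] V)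
    (hA : ∀ f g, inner ℝ (A f) g = inner ℝ f (A g)) {c : ℝ} (hc : 0 < c)
    (hbelow : ∀ f, c * ‖f‖ ≤ ‖A f‖) : Function.Bijective A := by
  have hadj : ContinuousLinearMap.adjoint A = A :=
    ((ContinuousLinearMap.eq_adjoint_iff A A).2 hA).symm
  have hanti : AntilipschitzWith (Real.toNNReal c⁻¹) A := by
    refine A.antilipschitz_of_bound fun f => ?_
    rw [Real.coe_toNNReal _ (by positivity)]
    calc ‖f‖ = c⁻¹ * (c * ‖f‖) := by field_simp
      _ ≤ _ := by gcongr; exact hbelow f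
  have hker : LinearMap.ker A.toLinearMap = ⊥ := LinearMap.ker_eq_bot.2 hanti.injective
  refine ⟨hanti.injective, ?_⟩
  have h := A.orthogonal_ker
  rw [hadj] at h
  change (LinearMap.ker A.toLinearMap)ᗮ = (LinearMap.range A.toLinearMap).topologicalClosure at h
  rw [hker, Submodule.bot_orthogonal_eq_top] at h
  have hc2 : IsClosed (Set.range A) := hanti.isClosed_range A.uniformContinuous
  intro g
  have h2 : g ∈ (LinearMap.range A.toLinearMap).topologicalClosure := h ▸ Submodule.mem_top
  have h3 : g ∈ closure (Set.range A) := h2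
  rwa [hc2.closure_eq] at h3

end Hilbert

/-! ### The Schrödinger operator on `ℓ²(ℤ)` -/

/-- The translation `(shift p f)(n) = f (n + p)` on `ℓ²(ℤ)`. -/
def shift (p : ℤ) : Ell2 →ₗᵢ[ℝ] Ell2 where
  toFun f := ⟨fun n => f (n + p), by
    refine memℓp_gen ?_
    exact ((lp.memℓp f).summable (by simp)).comp_injective (add_left_injective p)⟩
  map_add' f g := by ext n; rfl
  map_smul' a f := by ext n; rfl
  norm_map' f := by
    have h2 : (0 : ℝ) < (2 : ENNReal).toReal := by simp
    rw [lp.norm_eq_tsum_rpow h2, lp.norm_eq_tsum_rpow h2]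
    congr 1
    exact (Equiv.addRight p).tsum_eq (fun n => ‖f n‖ ^ (2 : ENNReal).toReal)

@[simp] lemma shift_apply (p : ℤ) (f : Ell2) (n : ℤ) : shift p f n = f (n + p) := rfl

/-- Multiplication by a potential `W` bounded by `M`, as an operator on `ℓ²(ℤ)`. -/
def mulOp (W : ℤ → ℝ) (M : ℝ) (hW : ∀ n, |W n| ≤ M) : Ell2 →L[ℝ] Ell2 :=
  LinearMap.mkContinuous
    { toFun := fun f => ⟨fun n => W n * f n, by
        refine ((lp.memℓp f).norm.const_mul M).mono fun n => ?_
        simp only [norm_mul, Real.norm_eq_abs]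
        gcongr
        exact hW n⟩
      map_add' := fun f g => by ext n; exact mul_add _ _ _
      map_smul' := fun a f => by ext n; exact mul_left_comm _ _ _ }
    M (fun f => by
      have hM : 0 ≤ M := (abs_nonneg _).trans (hW 0)
      calc _ ≤ ‖M • f‖ := by
            refine lp.norm_mono (by simp) fun n => ?_
            change ‖W n * f n‖ ≤ ‖M * f n‖
            rw [norm_mul, norm_mul, Real.norm_eq_abs, Real.norm_eq_abs M, abs_of_nonneg hM]
            gcongr
            exact hW n
        _ = _ := by rw [norm_smul, Real.norm_eq_abs, abs_of_nonneg hM])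

@[simp] lemma mulOp_apply (W : ℤ → ℝ) (M : ℝ) (hW : ∀ n, |W n| ≤ M) (f : Ell2) (n : ℤ) :
    mulOp W M hW f n = W n * f n := rfl

lemma norm_mulOp_apply_le (W : ℤ → ℝ) (M : ℝ) (hW : ∀ n, |W n| ≤ M) (f : Ell2) :
    ‖mulOp W M hW f‖ ≤ M * ‖f‖ :=
  ((mulOp W M hW).le_opNorm f).trans (by
    gcongr
    exact LinearMap.mkContinuous_norm_le _ ((abs_nonneg _).trans (hW 0)) _)

/-- The discrete Schrödinger operator `Δ + W` for a potential `W` bounded by `M`. -/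
def schrodingerOp (W : ℤ → ℝ) (M : ℝ) (hW : ∀ n, |W n| ≤ M) : Ell2 →L[ℝ] Ell2 :=
  (shift (-1)).toContinuousLinearMap + (shift 1).toContinuousLinearMap + mulOp W M hW

lemma inner_shift (p : ℤ) (f g : Ell2) : inner ℝ (shift p f) g = inner ℝ f (shift (-p) g) := by
  rw [lp.inner_eq_tsum, lp.inner_eq_tsum, ← (Equiv.addRight p).tsum_eq
    (fun n => inner ℝ (f n) (shift (-p) g n))]
  simp

lemma schrodingerOp_symm (W : ℤ → ℝ) (M : ℝ) (hW : ∀ n, |W n| ≤ M) (f g : Ell2) :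
    inner ℝ (schrodingerOp W M hW f) g = inner ℝ f (schrodingerOp W M hW g) := by
  have hm : inner ℝ (mulOp W M hW f) g = inner ℝ f (mulOp W M hW g) := by
    rw [lp.inner_eq_tsum, lp.inner_eq_tsum]
    refine tsum_congr fun n => ?_
    simp only [mulOp_apply, RCLike.inner_apply, conj_trivial]
    ring
  change inner ℝ (shift (-1) f + shift 1 f + mulOp W M hW f) g
    = inner ℝ f (shift (-1) g + shift 1 g + mulOp W M hW g)
  simp only [inner_add_left, inner_add_right, inner_shift, hm, neg_neg]
  ring

/-- `SchrodingerSpectrum` in terms of the bounded operator `schrodingerOp`. -/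
lemma notMem_spectrum_iff (W : ℤ → ℝ) (M : ℝ) (hW : ∀ n, |W n| ≤ M) (E : ℝ) :
    E ∉ SchrodingerSpectrum W ↔
      Function.Bijective (schrodingerOp W M hW - E • ContinuousLinearMap.id ℝ Ell2) := by
  have happ : ∀ (f : Ell2) (n : ℤ),
      (schrodingerOp W M hW - E • ContinuousLinearMap.id ℝ Ell2) f n
        = f (n - 1) + f (n + 1) + (W n - E) * f n := by
    intro f n
    change f (n - 1) + f (n + 1) + W n * f n - E * f n = _
    ring
  simp only [SchrodingerSpectrum, mem_ofPred_eq, not_not]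
  constructor
  · rintro ⟨T, hT⟩
    have : (⇑(schrodingerOp W M hW - E • ContinuousLinearMap.id ℝ Ell2) : Ell2 → Ell2) = T := by
      funext f
      ext n
      rw [happ, hT]
    rw [this]
    exact T.bijective
  · intro h
    exact ⟨LinearEquiv.ofBijective
      (schrodingerOp W M hW - E • ContinuousLinearMap.id ℝ Ell2).toLinearMap h, happ⟩

/-- Bounded inverse theorem, as a lower bound. -/
lemma bddBelow_of_bijective {V : Type*} [NormedAddCommGroup V] [NormedSpace ℝ V]
    [CompleteSpace V] (B : V →L[ℝ] V) (hB : Function.Bijective B) :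
    ∃ c > 0, ∀ f, c * ‖f‖ ≤ ‖B f‖ := by
  let e := ContinuousLinearEquiv.ofBijective B (LinearMap.ker_eq_bot.2 hB.1)
    (LinearMap.range_eq_top.2 hB.2)
  set N := ‖(e.symm : V →L[ℝ] V)‖ + 1 with hN
  have hN0 : 0 < N := by positivity
  refine ⟨N⁻¹, by positivity, fun f => ?_⟩
  have h1 : ‖f‖ ≤ N * ‖B f‖ := by
    calc ‖f‖ = ‖(e.symm : V →L[ℝ] V) (e f)‖ := by simp
      _ ≤ ‖(e.symm : V →L[ℝ] V)‖ * ‖e f‖ := ContinuousLinearMap.le_opNorm _ _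
      _ ≤ N * ‖B f‖ := by
        gcongr
        · linarith
        · exact le_of_eq rfl
  calc N⁻¹ * ‖f‖ ≤ N⁻¹ * (N * ‖B f‖) := by gcongr
    _ = ‖B f‖ := by field_simp

/-! ### Eigenfunctions and their translates -/

/-- A solution of the eigenvalue recurrence vanishing at `0` and `1` vanishes everywhere. -/
lemma eq_zero_of_recurrence (V u : ℤ → ℝ) (hu : ∀ n, u (n - 1) + u (n + 1) + V n * u n = 0)
    (h0 : u 0 = 0) (h1 : u 1 = 0) : ∀ n, u n = 0 := by
  have h : ∀ n : ℤ, u n = 0 ∧ u (n + 1) = 0 := by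
    intro n
    induction n using Int.induction_on with
    | zero => exact ⟨h0, by simpa using h1⟩
    | succ i ih =>
      refine ⟨ih.2, ?_⟩
      have := hu (i + 1)
      rw [ih.2, add_sub_cancel_right, ih.1] at this
      simpa using this
    | pred i ih =>
      have := hu (-i)
      rw [ih.1, ih.2] at this
      refine ⟨by simpa using this, ?_⟩
      rw [sub_add_cancel]; exact ih.1
  exact fun n => (h n).1

/-- The eigenspace embeds into `ℝ²` through the values at `0` and `1`; being
finite-dimensional, its norm is controlled by these two values. -/
lemma exists_norm_le_of_eigen (V : ℤ → ℝ) (A : Ell2 →L[ℝ] Ell2)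
    (hA : ∀ f n, A f n = f (n - 1) + f (n + 1) + V n * f n) :
    ∃ C > 0, ∀ u, A u = 0 → ∀ η, |u 0| ≤ η → |u 1| ≤ η → ‖u‖ ≤ C * η := by
  let K := LinearMap.ker A.toLinearMap
  let φ : K →ₗ[ℝ] ℝ × ℝ :=
    { toFun := fun u => ((u : Ell2) 0, (u : Ell2) 1)
      map_add' := fun u v => rfl
      map_smul' := fun a u => rfl }
  have hφ : LinearMap.ker φ = ⊥ := by
    rw [LinearMap.ker_eq_bot']
    intro u hu
    have hu' : ((u : Ell2) 0, (u : Ell2) 1) = ((0 : ℝ), (0 : ℝ)) := hu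
    rw [Prod.mk.injEq] at hu'
    ext n
    refine eq_zero_of_recurrence V (fun n => (u : Ell2) n) (fun n => ?_) hu'.1 hu'.2 n
    rw [← hA]
    have h : A (u : Ell2) = 0 := u.2
    rw [h]; rfl
  have : FiniteDimensional ℝ K :=
    FiniteDimensional.of_injective φ (LinearMap.ker_eq_bot.1 hφ)
  obtain ⟨C, hC, hanti⟩ := φ.exists_antilipschitzWith hφ
  refine ⟨C, by exact_mod_cast hC, fun u hu η h0 h1 => ?_⟩
  have h := hanti.le_mul_dist (⟨u, hu⟩ : K) 0
  rw [map_zero, dist_zero_right, dist_zero_right] at h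
  refine h.trans ?_
  gcongr
  exact max_le h0 h1

/-- An `ℓ²` sequence decays along every arithmetic progression, so some translate of it is small
at both `0` and `1`. -/
lemma exists_translate_small (f : Ell2) {p : ℤ} (hp : p ≠ 0) {η : ℝ} (hη : 0 < η) :
    ∃ j : ℕ, |f (0 + j * p)| ≤ η ∧ |f (1 + j * p)| ≤ η := by
  have hs : Summable fun n => f n * f n := by
    simpa [← sq] using lp.summable_inner (𝕜 := ℝ) f f
  have hinj : ∀ a : ℤ, Function.Injective fun j : ℕ => a + (j : ℤ) * p := by
    intro a i j hij
    have h : (i : ℤ) * p = j * p := add_left_cancel hij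
    exact_mod_cast mul_right_cancel₀ hp h
  have ht : ∀ a : ℤ, ∀ᶠ j : ℕ in Filter.atTop, |f (a + j * p)| ≤ η := by
    intro a
    have h1 := (hs.comp_injective (hinj a)).tendsto_atTop_zero
    filter_upwards [h1.eventually_lt_const (show 0 < η ^ 2 by positivity)] with j hj
    refine abs_le_of_sq_le_sq ?_ hη.le
    rw [sq]; exact hj.le
  obtain ⟨j, hj⟩ := ((ht 0).and (ht 1)).exists
  exact ⟨j, hj⟩

/-- If for every `ε` there is a `p ≠ 0` all of whose positive multiples are `ε`-almost periods of the
bounded potential `W`, then the spectrum of `Δ + W` has no isolated points. -/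
theorem preperfect_of_almostPeriods (W : ℤ → ℝ) (M : ℝ) (hW : ∀ n, |W n| ≤ M)
    (hap : ∀ ε > 0, ∃ p : ℤ, p ≠ 0 ∧ ∀ (j : ℕ) (n : ℤ), |W n - W (n + j * p)| ≤ ε) :
    Preperfect (SchrodingerSpectrum W) := by
  intro E hE
  by_contra hacc
  rw [accPt_iff_nhds] at hacc
  push Not at hacc
  obtain ⟨U, hU, hacc⟩ := hacc
  obtain ⟨δ, hδ, hball⟩ := Metric.mem_nhds_iff.1 hU
  set A := schrodingerOp W M hW - E • ContinuousLinearMap.id ℝ Ell2 with hAdef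
  have happ : ∀ (f : Ell2) (n : ℤ), A f n = f (n - 1) + f (n + 1) + (W n - E) * f n := by
    intro f n
    change f (n - 1) + f (n + 1) + W n * f n - E * f n = _
    ring
  have hsymm : ∀ f g, inner ℝ (A f) g = inner ℝ f (A g) := by
    intro f g
    change inner ℝ (schrodingerOp W M hW f - E • f) g = inner ℝ f (schrodingerOp W M hW g - E • g)
    simp only [inner_sub_left, inner_sub_right, schrodingerOp_symm, inner_smul_left,
      inner_smul_right, conj_trivial]
  have hinv : ∀ t : ℝ, t ≠ 0 → |t| < δ → ∃ c > 0, ∀ f, c * ‖f‖ ≤ ‖A f - t • f‖ := by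
    intro t ht htδ
    have hnot : E + t ∉ SchrodingerSpectrum W := by
      intro hmem
      have := hacc (E + t) ⟨hball (by simpa [Real.dist_eq] using htδ), hmem⟩
      exact ht (by linarith)
    obtain ⟨c, hc, h⟩ := bddBelow_of_bijective _ ((notMem_spectrum_iff W M hW _).1 hnot)
    refine ⟨c, hc, fun f => (h f).trans_eq ?_⟩
    congr 1
    change schrodingerOp W M hW f - (E + t) • f = schrodingerOp W M hW f - E • f - t • f
    module
  have hgap := gap_on_range A hsymm hδ hinv
  have hc : 0 < δ / 2 := by positivity
  set c := δ / 2
  -- With a trivial kernel, `A` would be bounded below and hence bijective.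
  obtain ⟨f, hf, hf0⟩ : ∃ f, A f = 0 ∧ f ≠ 0 := by
    by_contra! hno
    refine (notMem_spectrum_iff W M hW E).2
      (bijective_of_bddBelow A hsymm hc fun g => ?_) hE
    obtain ⟨u, hu, hle⟩ := exists_ker_close A hsymm hgap g
    rwa [hno u hu, sub_zero] at hle
  obtain ⟨C, hC, hker⟩ := exists_norm_le_of_eigen (fun n => W n - E) A happ
  have hfn : 0 < ‖f‖ := norm_pos_iff.2 hf0
  -- These accuracies force `‖g‖ ≤ ‖f‖ / 2` for the translate `g` of `f`, whereas `‖g‖ = ‖f‖`.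
  obtain ⟨p, hp, hper⟩ := hap (c / (4 * (C + 1))) (by positivity)
  obtain ⟨j, hj0, hj1⟩ := exists_translate_small f hp (η := ‖f‖ / (4 * C)) (by positivity)
  set g := shift (j * p) f with hg
  have hgn : ‖g‖ = ‖f‖ := (shift (j * p)).norm_map f
  have hAg : A g = mulOp (fun n => W n - W (n + j * p)) _ (hper j) g := by
    ext n
    have h0 : A f (n + j * p) = 0 := by rw [hf]; rfl
    rw [happ] at h0
    rw [happ, mulOp_apply, hg, shift_apply, shift_apply, shift_apply,
      show n - 1 + j * p = n + j * p - 1 by ring, show n + 1 + j * p = n + j * p + 1 by ring]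
    linarith
  obtain ⟨u, hu, hle⟩ := exists_ker_close A hsymm hgap g
  have hAgn : ‖A g‖ ≤ c / (4 * (C + 1)) * ‖f‖ := by
    rw [hAg, ← hgn]; exact norm_mulOp_apply_le _ _ _ _
  have hdist : ‖g - u‖ ≤ ‖f‖ / (4 * (C + 1)) := by
    have h : c * ‖g - u‖ ≤ c * (‖f‖ / (4 * (C + 1))) :=
      (hle.trans hAgn).trans_eq (by ring)
    exact le_of_mul_le_mul_left h hc
  have hval : ∀ n, |g n| ≤ ‖f‖ / (4 * C) → |u n| ≤ ‖f‖ / (4 * C) + ‖f‖ / (4 * (C + 1)) := by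
    intro n hn
    have h1 : |g n - u n| ≤ ‖g - u‖ := lp.norm_apply_le_norm (by simp) (g - u) n
    have h2 : |u n| ≤ |g n| + |g n - u n| := by
      have := abs_sub (g n) (g n - u n)
      rwa [sub_sub_cancel] at this
    linarith
  have hun := hker u hu _ (hval 0 hj0) (hval 1 hj1)
  have htri : ‖f‖ ≤ ‖u‖ + ‖g - u‖ := by
    rw [← hgn]
    have := norm_add_le u (g - u)
    rwa [add_sub_cancel] at this
  have e : C * (‖f‖ / (4 * C) + ‖f‖ / (4 * (C + 1))) + ‖f‖ / (4 * (C + 1)) = ‖f‖ / 2 := by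
    field_simp; ring
  linarith

/-! ### Aggregated limit-periodic sequences -/

lemma agg_apply (k : ℕ) (hk : 0 < k) (x : ℤ → (Fin k → ℝ)) (n : ℤ) :
    agg k x n = x (Int.fdiv n k) ⟨(n % (k : ℤ)).toNat, by
      have h1 : 0 ≤ n % (k : ℤ) := Int.emod_nonneg n (by exact_mod_cast hk.ne')
      have h2 : n % (k : ℤ) < (k : ℤ) := Int.emod_lt_of_pos n (by exact_mod_cast hk)
      omega⟩ := by
  rw [agg, dif_pos hk]

lemma abs_agg_sub_agg_le {k : ℕ} (hk : 0 < k) (x y : ℤ →ᵇ (Fin k → ℝ)) (n : ℤ) :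
    |agg k x n - agg k y n| ≤ dist x y := by
  rw [agg_apply k hk, agg_apply k hk, ← Real.dist_eq]
  exact (dist_le_pi_dist _ _ _).trans (dist_coe_le_dist _)

lemma agg_periodic {k : ℕ} (hk : 0 < k) (y : ℤ → (Fin k → ℝ)) (q : ℕ)
    (hq : ∀ n, y (n + q) = y n) (n : ℤ) : agg k y (n + k * q) = agg k y n := by
  have hk' : (k : ℤ) ≠ 0 := by exact_mod_cast hk.ne'
  have h1 : Int.fdiv (n + k * q) k = Int.fdiv n k + q := by
    rw [Int.add_mul_fdiv_left _ _ hk']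
  have h2 : (n + k * q) % (k : ℤ) = n % k := by simp
  rw [agg_apply k hk, agg_apply k hk, h1, hq]
  congr 2
  rw [h2]

/-- For any limit-periodic `x ∈ LP(ℤ,Y)` over a closed perfect set `Y ⊆ ℝ^k`,
the spectrum of `H_x` has no isolated points. -/
theorem limitPeriodic_spectrum_preperfect (k : ℕ) (hk : 0 < k)
    (Y : Set (Fin k → ℝ)) (hY : Perfect Y)
    (x : ℤ →ᵇ (Fin k → ℝ)) (hx : x ∈ LPY k Y) :
    Preperfect (SchrodingerSpectrum (agg k ⇑x)) := by
  refine preperfect_of_almostPeriods (agg k ⇑x) ‖x‖ (fun n => ?_) fun ε hε => ?_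
  · have h := abs_agg_sub_agg_le hk x 0 n
    have h0 : agg k (⇑(0 : ℤ →ᵇ (Fin k → ℝ))) n = 0 := by rw [agg_apply k hk]; rfl
    rwa [h0, sub_zero, dist_zero_right] at h
  · obtain ⟨y, ⟨⟨q, hq, hper⟩, -⟩, hxy⟩ := Metric.mem_closure_iff.1 hx (ε / 2) (by positivity)
    refine ⟨k * q, by positivity, fun j n => ?_⟩
    have hj : agg k y (n + j * (k * q)) = agg k y n := by
      induction j with
      | zero => simp
      | succ i ih =>
        rw [← ih, ← agg_periodic hk y q hper (n + i * (k * q))]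
        congr 1
        push_cast
        ring
    have h1 := abs_agg_sub_agg_le hk x y n
    have h2 := abs_agg_sub_agg_le hk x y (n + j * (k * q))
    rw [hj, abs_sub_comm] at h2
    have h3 := abs_sub_le (agg k x n) (agg k y n) (agg k x (n + j * (k * q)))
    linarith
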